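/- (Bayes optimality of a neighborhood of g_λ.) Suppose assumptions (A2)–(A5) hold and that the expected risk L is convex and continuous on H. Then there exists λ > 0 such that every g ∈ H with ‖g − g_λ‖ ≤ m(δ)/(2R) is a Bayes classifier for the classification error, i.e. R(x ↦ ⟨g,Φ(x)⟩) = R*. -/

import Mathlib

open MeasureTheory Filter Set
open scoped RealInnerProductSpace ENNReal

theorem tikh_strong {H : Type*} [NormedAddCommGroup H] [InnerProductSpace ℝ H]
    (L : H → ℝ) (hL : ConvexOn ℝ Set.univ L) (lam : ℝ) (a : H)
    (ha : ∀ g : H, L a + lam / 2 * ‖a‖ ^ 2 ≤ L g + lam / 2 * ‖g‖ ^ 2) (g : H) :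
    L a + lam / 2 * ‖a‖ ^ 2 + lam / 2 * ‖g - a‖ ^ 2 ≤ L g + lam / 2 * ‖g‖ ^ 2 := by
  have key : ∀ t : ℝ, 0 < t → t < 1 →
      L a + lam / 2 * ‖a‖ ^ 2 + (1 - t) * (lam / 2 * ‖g - a‖ ^ 2) ≤ L g + lam / 2 * ‖g‖ ^ 2 := by
    intro t h0 h1
    have h2 := ha ((1 - t) • a + t • g)
    have h3 := hL.2 (mem_univ a) (mem_univ g) (by linarith : 0 ≤ 1 - t) h0.le (by ring)
    have h4 : ‖(1 - t) • a + t • g‖ ^ 2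
        = (1 - t) * ‖a‖ ^ 2 + t * ‖g‖ ^ 2 - t * (1 - t) * ‖g - a‖ ^ 2 := by
      rw [norm_add_sq_real, norm_sub_sq_real, norm_smul, norm_smul, inner_smul_left,
        inner_smul_right, real_inner_comm, mul_pow, mul_pow, Real.norm_eq_abs, Real.norm_eq_abs,
        sq_abs, sq_abs]
      simp only [conj_trivial]
      ring
    rw [h4] at h2
    simp only [smul_eq_mul] at h3
    have h5 : t * (L a + lam / 2 * ‖a‖ ^ 2 + (1 - t) * (lam / 2 * ‖g - a‖ ^ 2))
        ≤ t * (L g + lam / 2 * ‖g‖ ^ 2) := by linarith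
    exact le_of_mul_le_mul_left h5 h0
  have hlim : Tendsto (fun t : ℝ => L a + lam / 2 * ‖a‖ ^ 2 + (1 - t) * (lam / 2 * ‖g - a‖ ^ 2))
      (nhdsWithin 0 (Ioo 0 1)) (nhds (L a + lam / 2 * ‖a‖ ^ 2
        + (1 - 0) * (lam / 2 * ‖g - a‖ ^ 2))) := by
    apply Tendsto.mono_left _ nhdsWithin_le_nhds
    exact Continuous.tendsto (by fun_prop) 0
  have : (nhdsWithin (0 : ℝ) (Ioo 0 1)).NeBot := left_nhdsWithin_Ioo_neBot (by norm_num)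
  have := le_of_tendsto hlim (by
    filter_upwards [self_mem_nhdsWithin] with t ht using key t ht.1 ht.2)
  linarith

theorem tikh_conv {H : Type*} [NormedAddCommGroup H] [InnerProductSpace ℝ H] [CompleteSpace H]
    (L : H → ℝ) (hL : ConvexOn ℝ Set.univ L) (hc : Continuous L) (gs : H)
    (hmin : ∀ g, L gs ≤ L g) (huniq : ∀ g, L g = L gs → g = gs)
    (a : ℕ → H)
    (ha : ∀ n : ℕ, ∀ g : H, L (a n) + (1 / ((n : ℝ) + 1)) / 2 * ‖a n‖ ^ 2
      ≤ L g + (1 / ((n : ℝ) + 1)) / 2 * ‖g‖ ^ 2) :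
    Tendsto a atTop (nhds gs) := by
  have hs := fun n => tikh_strong L hL _ (a n) (ha n)
  have pos : ∀ n : ℕ, 0 < 1 / ((n : ℝ) + 1) := fun n => by positivity
  have hbd : ∀ n, ‖a n‖ ^ 2 ≤ ‖gs‖ ^ 2 := by
    intro n
    have h1 := ha n gs
    have h2 := hmin (a n)
    have h3 : (1 / ((n : ℝ) + 1)) / 2 * ‖a n‖ ^ 2 ≤ (1 / ((n : ℝ) + 1)) / 2 * ‖gs‖ ^ 2 := by
      linarith
    exact le_of_mul_le_mul_left h3 (by have := pos n; linarith)
  have hkey : ∀ n m : ℕ, n ≤ m → ‖a m - a n‖ ^ 2 ≤ ‖a m‖ ^ 2 - ‖a n‖ ^ 2 := by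
    intro n m hnm
    rcases hnm.eq_or_lt with rfl | hlt
    · simp
    have hl : 1 / ((m : ℝ) + 1) < 1 / ((n : ℝ) + 1) := by
      apply one_div_lt_one_div_of_lt (by positivity)
      have : (n : ℝ) < m := by exact_mod_cast hlt
      linarith
    have h1 := hs n (a m)
    have h2 := ha m (a n)
    have pn := pos n
    have pm := pos m
    generalize 1 / ((m : ℝ) + 1) = μ at *
    generalize 1 / ((n : ℝ) + 1) = l at *
    have q := sq_nonneg ‖a m - a n‖
    have q1 := mul_nonneg pn.le q
    have h3 : ‖a n‖ ^ 2 ≤ ‖a m‖ ^ 2 := by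
      have : (l - μ) * ‖a n‖ ^ 2 ≤ (l - μ) * ‖a m‖ ^ 2 := by linarith
      exact le_of_mul_le_mul_left this (by linarith)
    have h4 : L (a m) ≤ L (a n) := by nlinarith
    have h5 : l * ‖a m - a n‖ ^ 2 ≤ l * (‖a m‖ ^ 2 - ‖a n‖ ^ 2) := by linarith
    exact le_of_mul_le_mul_left h5 pn
  have hmono : Monotone fun n => ‖a n‖ ^ 2 := by
    intro n m hnm
    have := hkey n m hnm
    have := sq_nonneg ‖a m - a n‖
    show ‖a n‖ ^ 2 ≤ ‖a m‖ ^ 2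
    linarith
  have hcv := tendsto_atTop_ciSup hmono ⟨‖gs‖ ^ 2, by rintro _ ⟨n, rfl⟩; exact hbd n⟩
  have hcau := hcv.cauchySeq
  have hac : CauchySeq a := by
    rw [Metric.cauchySeq_iff'] at hcau ⊢
    intro ε hε
    obtain ⟨N, hN⟩ := hcau (ε ^ 2) (by positivity)
    refine ⟨N, fun n hn => ?_⟩
    have h1 := hN n hn
    rw [Real.dist_eq] at h1
    rw [dist_eq_norm]
    exact lt_of_pow_lt_pow_left₀ 2 hε.le
      ((hkey N n hn).trans_lt ((le_abs_self _).trans_lt h1))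
  obtain ⟨g, hg⟩ := cauchySeq_tendsto_of_complete hac
  have hLg := (hc.tendsto g).comp hg
  have hup : Tendsto (fun n : ℕ => L gs + (1 / ((n : ℝ) + 1)) / 2 * ‖gs‖ ^ 2) atTop
      (nhds (L gs + 0 / 2 * ‖gs‖ ^ 2)) :=
    ((tendsto_one_div_add_atTop_nhds_zero_nat.div_const 2).mul_const _).const_add _
  have hle : L g ≤ L gs + 0 / 2 * ‖gs‖ ^ 2 := by
    refine le_of_tendsto_of_tendsto' hLg hup fun n => ?_
    have h1 := ha n gs
    have h2 : 0 ≤ (1 / ((n : ℝ) + 1)) / 2 * ‖a n‖ ^ 2 := by positivity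
    simp only [Function.comp]
    linarith
  have : g = gs := huniq g (le_antisymm (by linarith) (hmin g))
  exact this ▸ hg

/-- Bayes optimality of a neighborhood of `g_λ` (Proposition 1): under the
bounded-kernel assumption (A2), the strong low-noise condition (A3), the link
function assumptions (A4) and (A5), and convexity/continuity of the expected
risk, there exists `λ > 0` such that every `g` in the `m(δ)/(2R)`-ball around a
minimizer `g_λ` of the regularized risk achieves the Bayes classification
error. -/
theorem bayes_optimal_neighborhood
    {X : Type*} [MeasurableSpace X]
    {H : Type*} [NormedAddCommGroup H] [InnerProductSpace ℝ H] [CompleteSpace H]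
    (Φ : X → H) (hΦmeas : StronglyMeasurable Φ)
    (R : ℝ) (hR : 0 < R) (hΦbd : ∀ x : X, ‖Φ x‖ ≤ R)
    (ρ : Measure (X × ℝ)) [IsProbabilityMeasure ρ]
    (η : X → ℝ) (hηmeas : Measurable η)
    -- η is the conditional probability of the label `+1` given `x`:
    (hcond : ρ = (ρ.map Prod.fst).bind fun x =>
      ENNReal.ofReal (η x) • Measure.dirac (x, (1 : ℝ)) +
        ENNReal.ofReal (1 - η x) • Measure.dirac (x, (-1 : ℝ)))
    (φ : ℝ → ℝ) (hφconv : ConvexOn ℝ Set.univ φ)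
    (Lrisk : H → ℝ)
    (hLdef : ∀ g : H, Lrisk g = ∫ z : X × ℝ, φ (z.2 * ⟪g, Φ z.1⟫) ∂ρ)
    (hLint : ∀ g : H, Integrable (fun z : X × ℝ => φ (z.2 * ⟪g, Φ z.1⟫)) ρ)
    (hLconv : ConvexOn ℝ Set.univ Lrisk) (hLcont : Continuous Lrisk)
    -- (A3): strong low-noise condition
    (δ : ℝ) (hδ : δ ∈ Set.Ioo (0 : ℝ) (1 / 2))
    (hlow : ∀ᵐ x ∂ρ.map Prod.fst, δ < |η x - 1 / 2|)
    -- (A4): properties of the link function `h_*`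
    (hη01 : ∀ᵐ x ∂ρ.map Prod.fst, η x ∈ Set.Ioo (0 : ℝ) 1)
    (hstar : ℝ → ℝ)
    (hstardiff : ∀ p ∈ Set.Ioo (0 : ℝ) 1, DifferentiableAt ℝ hstar p)
    (hstarmono : StrictMonoOn hstar (Set.Ioo (0 : ℝ) 1))
    (hstarmin : ∀ p ∈ Set.Ioo (0 : ℝ) 1, ∀ h : ℝ,
      p * φ (hstar p) + (1 - p) * φ (-hstar p) ≤ p * φ h + (1 - p) * φ (-h))
    (hstaruniq : ∀ p ∈ Set.Ioo (0 : ℝ) 1, ∀ h : ℝ,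
      p * φ h + (1 - p) * φ (-h) = p * φ (hstar p) + (1 - p) * φ (-hstar p) →
      h = hstar p)
    (hstarsign : ∀ p ∈ Set.Ioo (0 : ℝ) 1,
      Real.sign (hstar p) = Real.sign (p - 1 / 2))
    -- (A5): the Bayes rule for the risk lies in `H` and is unique
    (gstar : H)
    (hgstarmin : ∀ f : X → ℝ, Measurable f →
      Integrable (fun z : X × ℝ => φ (z.2 * f z.1)) ρ →
      (∫ z : X × ℝ, φ (z.2 * ⟪gstar, Φ z.1⟫) ∂ρ) ≤ ∫ z : X × ℝ, φ (z.2 * f z.1) ∂ρ)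
    (hgstaruniq : ∀ g : H, Lrisk g = Lrisk gstar → g = gstar)
    (hgstarlink : ∀ᵐ x ∂ρ.map Prod.fst, ⟪gstar, Φ x⟫ = hstar (η x)) :
    ∃ lam : ℝ, 0 < lam ∧ ∀ glam : H,
      (∀ g : H, Lrisk glam + lam / 2 * ‖glam‖ ^ 2 ≤ Lrisk g + lam / 2 * ‖g‖ ^ 2) →
      ∀ g : H, ‖g - glam‖ ≤ max (hstar (1 / 2 + δ)) |hstar (1 / 2 - δ)| / (2 * R) →
        ρ {p : X × ℝ | Real.sign ⟪g, Φ p.1⟫ ≠ p.2} =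
          ρ {p : X × ℝ | Real.sign (2 * η p.1 - 1) ≠ p.2} := by
  have hmin : ∀ g, Lrisk gstar ≤ Lrisk g := by
    intro g
    rw [hLdef, hLdef]
    exact hgstarmin (fun x => ⟪g, Φ x⟫)
      ((stronglyMeasurable_const.inner hΦmeas).measurable) (hLint g)
  obtain ⟨hd0, hd1⟩ := hδ
  have hp : 1 / 2 + δ ∈ Ioo (0 : ℝ) 1 := ⟨by linarith, by linarith⟩
  have hq : 1 / 2 - δ ∈ Ioo (0 : ℝ) 1 := ⟨by linarith, by linarith⟩
  have hh : (1 / 2 : ℝ) ∈ Ioo (0 : ℝ) 1 := ⟨by norm_num, by norm_num⟩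
  have hhalf : hstar (1 / 2) = 0 := by
    have := hstarsign _ hh
    rw [sub_self, Real.sign_zero] at this
    exact Real.sign_eq_zero_iff.1 this
  have hsym : -hstar (1 / 2 + δ) = hstar (1 / 2 - δ) := by
    apply hstaruniq _ hq
    have h1 := hstarmin _ hq (-hstar (1 / 2 + δ))
    have h2 := hstarmin _ hp (-hstar (1 / 2 - δ))
    rw [neg_neg] at h1 h2 ⊢
    apply le_antisymm _ h1
    linarith
  have hmpos : 0 < hstar (1 / 2 + δ) := hhalf ▸ hstarmono hh hp (by linarith)
  have hmax : max (hstar (1 / 2 + δ)) |hstar (1 / 2 - δ)| = hstar (1 / 2 + δ) := by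
    rw [← hsym, abs_neg, abs_of_pos hmpos, max_self]
  rw [hmax]
  set m := hstar (1 / 2 + δ) with hm
  have hstep : ∀ glam : H, ‖glam - gstar‖ ≤ m / (2 * R) → ∀ g : H, ‖g - glam‖ ≤ m / (2 * R) →
        ρ {p : X × ℝ | Real.sign ⟪g, Φ p.1⟫ ≠ p.2} =
          ρ {p : X × ℝ | Real.sign (2 * η p.1 - 1) ≠ p.2} := by
    intro glam h1 g h2
    have hae : ∀ᵐ x ∂ρ.map Prod.fst, Real.sign ⟪g, Φ x⟫ = Real.sign (2 * η x - 1) := by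
      filter_upwards [hlow, hη01, hgstarlink] with x hx hx1 hx2
      have h3 : ‖g - gstar‖ ≤ m / R := by
        have := norm_sub_le_norm_sub_add_norm_sub g glam gstar
        have e : m / (2 * R) + m / (2 * R) = m / R := by field_simp; ring
        linarith
      have h4 : |⟪g, Φ x⟫ - hstar (η x)| ≤ m := by
        rw [← hx2, ← inner_sub_left]
        calc _ ≤ ‖g - gstar‖ * ‖Φ x‖ := abs_real_inner_le_norm _ _
          _ ≤ m / R * R := by
            gcongr
            exact hΦbd x
          _ = m := by field_simp
      rw [abs_le] at h4
      rcases lt_abs.1 hx with h | h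
      · have h5 : m < hstar (η x) := hstarmono hp hx1 (by linarith)
        rw [Real.sign_of_pos (by linarith), Real.sign_of_pos (by linarith)]
      · have h5 : hstar (η x) < hstar (1 / 2 - δ) := hstarmono hx1 hq (by linarith)
        rw [Real.sign_of_neg (by linarith), Real.sign_of_neg (by linarith)]
    have hae2 := ae_of_ae_map measurable_fst.aemeasurable hae
    apply measure_congr
    filter_upwards [hae2] with p hp
    apply propext
    show (Real.sign ⟪g, Φ p.1⟫ ≠ p.2) ↔ (Real.sign (2 * η p.1 - 1) ≠ p.2)
    rw [hp]
  by_contra hcon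
  push Not at hcon
  choose a ha g hg hne using fun n : ℕ => hcon (1 / ((n : ℝ) + 1)) (by positivity)
  have hconv := tikh_conv Lrisk hLconv hLcont gstar hmin hgstaruniq a ha
  obtain ⟨N, hN⟩ := Metric.tendsto_atTop.1 hconv (m / (2 * R)) (by positivity)
  have h1 := hN N le_rfl
  rw [dist_eq_norm] at h1
  exact hne N (hstep (a N) h1.le (g N) (hg N))
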